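/- arXiv:2211.17227 — 8 statements merged into one kernel-verified Lean document; each statement's English description precedes it below -/
import Mathlib

section
/- Let R be a Noetherian commutative ring and let x ∈ R be a nonzerodivisor such that R is x-adically complete. Let M be a cochain complex of R-modules each of whose cohomology modules H^i(M) is derived x-complete, and let C denote the mapping cone of the multiplication-by-x endomorphism of M (so for every i there is a short exact sequence 0 → H^i(M)/x·H^i(M) → H^i(C) → H^{i+1}(M)[x] → 0, where H^{i+1}(M)[x] is the x-torsion submodule). Suppose there are integers n₀ ≤ d such that H^i(C) = 0 for all i < n₀ and H^i(C) is a finitely generated R-module for all i ≤ d. Then H^i(M) = 0 for all i < n₀ and H^i(M) is a finitely generated R-module for all i ≤ d. -/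
open CategoryTheory

/-- An `R`-module `M` is *derived `x`-complete* if the endomorphism
`Φ_x : ∏_{n ∈ ℕ} M → ∏_{n ∈ ℕ} M`, `(m_n)_n ↦ (m_n − x • m_{n+1})_n`, is bijective. -/
def IsDerivedComplete (R : Type*) [CommRing R] (x : R)
    (M : Type*) [AddCommGroup M] [Module R M] : Prop :=
  Function.Bijective (fun f : ℕ → M => fun n => f n - x • f (n + 1))

lemma my_adic_surj {R : Type*} [CommRing R] (x : R) [IsAdicComplete (Ideal.span {x}) R]
    (r : ℕ → R) : ∃ s : ℕ → R, ∀ n, s n - x * s (n + 1) = r n := by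
  have hmem : ∀ (n : ℕ) (a b : R),
      a ≡ b [SMOD ((Ideal.span {x}) ^ n • ⊤ : Submodule R R)] ↔ x ^ n ∣ a - b := by
    intro n a b
    rw [SModEq.sub_mem, Ideal.span_singleton_pow, smul_eq_mul, Ideal.mul_top,
      Ideal.mem_span_singleton]
  have key : ∀ n, ∃ L : R, ∀ N, x ^ N ∣ (∑ j ∈ Finset.range N, x ^ j * r (n + j)) - L := by
    intro n
    have := IsPrecomplete.prec (I := Ideal.span {x}) (M := R) inferInstance
      (f := fun N => ∑ j ∈ Finset.range N, x ^ j * r (n + j)) (by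
        intro a b hab
        rw [hmem, ← Finset.sum_range_add_sum_Ico _ hab, dvd_sub_comm, add_sub_cancel_left]
        refine Finset.dvd_sum fun j hj => ?_
        exact (pow_dvd_pow x (Finset.mem_Ico.1 hj).1).mul_right _)
    obtain ⟨L, hL⟩ := this
    exact ⟨L, fun N => (hmem _ _ _).1 (hL N)⟩
  choose s hs using key
  refine ⟨s, fun n => ?_⟩
  rw [IsHausdorff.eq_iff_smodEq (I := Ideal.span {x})]
  intro N
  rw [hmem]
  have h1 := (pow_dvd_pow x (Nat.le_succ N)).trans (hs n (N + 1))
  have h2 := (hs (n + 1) N).mul_left x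
  rw [Finset.sum_range_succ'] at h1
  have h3 := dvd_sub h2 h1
  convert h3 using 1
  rw [mul_sub, Finset.mul_sum]
  have : ∀ j, x ^ (j + 1) * r (n + (j + 1)) = x * (x ^ j * r (n + 1 + j)) := by
    intro j; rw [show n + (j + 1) = n + 1 + j by ring]; ring
  simp only [this]
  simp
  ring

lemma my_zero_of_seq {R : Type*} [CommRing R] {x : R} {H : Type*} [AddCommGroup H] [Module R H]
    (hH : IsDerivedComplete R x H) (h : ℕ → H) (hh : ∀ n, h n = x • h (n + 1)) (n : ℕ) :
    h n = 0 := by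
  have : h = 0 := by
    apply hH.1
    funext n
    simp [← hh n]
  simp [this]

lemma my_nakayama {R : Type*} [CommRing R] {x : R} [IsAdicComplete (Ideal.span {x}) R]
    {H : Type*} [AddCommGroup H] [Module R H]
    (hH : IsDerivedComplete R x H) {k : ℕ} (g : Fin k → H)
    (hg : ∀ h : H, ∃ (c : Fin k → R) (h' : H), h = ∑ i, c i • g i + x • h') :
    Submodule.span R (Set.range g) = ⊤ := by
  choose c nx hc using hg
  rw [eq_top_iff]
  intro h _
  let u : ℕ → H := fun n => nx^[n] h
  have hu : ∀ n, u n = ∑ i, c (u n) i • g i + x • u (n + 1) := by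
    intro n
    simp only [u, Function.iterate_succ_apply']
    exact hc _
  have := fun i => my_adic_surj x (fun n => c (u n) i)
  choose s hs using this
  have h0 := my_zero_of_seq hH (fun n => u n - ∑ i, s i n • g i) (fun n => by
    have : ∑ i, s i n • g i = ∑ i, c (u n) i • g i + x • ∑ i, s i (n + 1) • g i := by
      rw [Finset.smul_sum, ← Finset.sum_add_distrib]
      refine Finset.sum_congr rfl fun i _ => ?_
      rw [← hs i n, smul_smul, ← add_smul, sub_add_cancel]
    rw [this, smul_sub]
    nth_rewrite 1 [hu n]
    abel) 0
  have h1 : h = ∑ i, s i 0 • g i := sub_eq_zero.1 h0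
  rw [h1]
  exact Submodule.sum_mem _ fun i _ => Submodule.smul_mem _ _ (Submodule.subset_span ⟨i, rfl⟩)

lemma my_finite {R : Type*} [CommRing R] [IsNoetherianRing R] {x : R}
    [IsAdicComplete (Ideal.span {x}) R]
    {H K : Type*} [AddCommGroup H] [Module R H] [AddCommGroup K] [Module R K] [Module.Finite R K]
    (hH : IsDerivedComplete R x H) (φ : H →ₗ[R] K)
    (hφ : ∀ h, φ h = 0 → ∃ h', h = x • h') : Module.Finite R H := by
  obtain ⟨k, w, hw⟩ := Module.Finite.exists_fin (R := R) (M := LinearMap.range φ)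
  choose g hg using fun i => (w i).2
  classical
  refine ⟨⟨Finset.univ.image g, ?_⟩⟩
  have := my_nakayama hH g (fun h => by
    have : (⟨φ h, h, rfl⟩ : LinearMap.range φ) ∈ Submodule.span R (Set.range w) := hw ▸ trivial
    obtain ⟨c, hc⟩ := (Submodule.mem_span_range_iff_exists_fun R).1 this
    have hc' := congrArg Subtype.val hc
    obtain ⟨h', hh'⟩ := hφ (h - ∑ i, c i • g i) (by
      simp only [map_sub, map_sum, map_smul, hg]
      simp at hc'
      rw [hc', sub_self])
    exact ⟨c, h', by rw [← hh']; abel⟩)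
  simpa using this

lemma my_subsingleton {R : Type*} [CommRing R] {x : R}
    {H K : Type*} [AddCommGroup H] [Module R H] [AddCommGroup K] [Module R K] [Subsingleton K]
    (hH : IsDerivedComplete R x H) (φ : H →ₗ[R] K)
    (hφ : ∀ h, φ h = 0 → ∃ h', h = x • h') : Subsingleton H := by
  choose nx hnx using fun h => hφ h (Subsingleton.elim _ _)
  refine subsingleton_of_forall_eq 0 fun h => ?_
  exact my_zero_of_seq hH (fun n => nx^[n] h)
    (fun n => by simp only [Function.iterate_succ_apply']; exact hnx _) 0

lemma my_map_smul {R : Type} [CommRing R] (x : R) (M : CochainComplex (ModuleCat R) ℤ) (i : ℤ) :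
    HomologicalComplex.homologyMap (x • 𝟙 M) i = x • 𝟙 (M.homology i) := by
  have h1 : (HomologicalComplex.shortComplexFunctor (ModuleCat R) (ComplexShape.up ℤ) i).map
      (x • 𝟙 M) = x • 𝟙 (M.sc i) := by
    ext <;> rfl
  unfold HomologicalComplex.homologyMap
  rw [h1, ShortComplex.homologyMap_smul, ShortComplex.homologyMap_id]
  rfl

lemma my_exact {R : Type} [CommRing R] (x : R) (M : CochainComplex (ModuleCat R) ℤ) (i : ℤ)
    (h : M.homology i)
    (hh : (HomologicalComplex.homologyMap (CochainComplex.mappingCone.inr (x • 𝟙 M)) i).hom h = 0) :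
    ∃ h' : M.homology i, h = x • h' := by
  have hx : HomologicalComplex.homologyMap (x • 𝟙 M) i = x • 𝟙 _ := by
    exact my_map_smul x M i
  have ex := (HomotopyCategory.homologyFunctor (ModuleCat R) (ComplexShape.up ℤ) i).map_distinguished_exact _
    (HomotopyCategory.mappingCone_triangleh_distinguished (x • 𝟙 M))
  let e := HomotopyCategory.homologyFunctorFactors (ModuleCat R) (ComplexShape.up ℤ) i
  have n1 := e.hom.naturality (x • 𝟙 M)
  have n2 := e.inv.naturality (CochainComplex.mappingCone.inr (x • 𝟙 M))
  rw [ShortComplex.moduleCat_exact_iff] at ex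
  obtain ⟨y, hy⟩ := ex ((e.inv.app M).hom h) (by
    have := ConcreteCategory.congr_hom n2 h
    refine this.symm.trans ?_
    exact (congrArg (e.inv.app _).hom hh).trans (map_zero _))
  refine ⟨(e.hom.app M).hom y, ?_⟩
  have h1 := ConcreteCategory.congr_hom n1 y
  have h2 := congrArg (e.hom.app M).hom hy
  have h3 : (e.hom.app M).hom ((e.inv.app M).hom h) = h := ConcreteCategory.congr_hom (e.inv_hom_id_app M) h
  refine h3.symm.trans (h2.symm.trans (h1.trans ?_))
  exact ConcreteCategory.congr_hom hx _

/-- Let `R` be a Noetherian commutative ring, `x ∈ R` a nonzerodivisor such that `R` is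
`x`-adically complete, and `M` a cochain complex of `R`-modules whose cohomology modules are
all derived `x`-complete.  Let `C` be the mapping cone of the multiplication-by-`x`
endomorphism of `M`.  If there are integers `n₀ ≤ d` such that `H^i(C) = 0` for `i < n₀`
and `H^i(C)` is finitely generated for `i ≤ d`, then `H^i(M) = 0` for `i < n₀` and
`H^i(M)` is finitely generated for `i ≤ d`. -/
theorem homology_vanishing_and_finite_of_cone
    {R : Type} [CommRing R] [IsNoetherianRing R] (x : R)
    (hx : x ∈ nonZeroDivisors R)
    [IsAdicComplete (Ideal.span {x}) R]
    (M : CochainComplex (ModuleCat R) ℤ)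
    (hM : ∀ i : ℤ, IsDerivedComplete R x (M.homology i))
    (C : CochainComplex (ModuleCat R) ℤ) (hC : C = CochainComplex.mappingCone (x • 𝟙 M))
    (n₀ d : ℤ) (hn₀d : n₀ ≤ d)
    (hCvanish : ∀ i < n₀, Subsingleton (C.homology i))
    (hCfin : ∀ i ≤ d, Module.Finite R (C.homology i)) :
    (∀ i < n₀, Subsingleton (M.homology i)) ∧ ∀ i ≤ d, Module.Finite R (M.homology i) := by
  subst hC
  refine ⟨fun i hi => ?_, fun i hi => ?_⟩
  · have := hCvanish i hi
    exact my_subsingleton (hM i) _ (my_exact x M i)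
  · have := hCfin i hi
    exact my_finite (hM i) _ (my_exact x M i)
end

section
/- Let k be a field and let M be a module over the power series ring k[[u]] such that: (i) every element of M is annihilated by some power of u; (ii) M is not of finite length over k[[u]]; and (iii) the u-torsion submodule M[u] = {m ∈ M | u • m = 0} is a finite-dimensional k-vector space. Then the u-adic Tate module T_u(M) is nonzero; that is, there exists a sequence (y_n)_{n ≥ 1} of elements of M, not all zero, such that u^n • y_n = 0 and u • y_{n+1} = y_n for all n ≥ 1. -/
open PowerSeries

/-- Let `k` be a field and `M` a module over `k[[u]]` such that every element of `M` is
annihilated by a power of `u`, `M` is not of finite length over `k[[u]]`, and the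
`u`-torsion submodule `M[u]` is a finite-dimensional `k`-vector space.  Then the `u`-adic
Tate module `T_u(M)` is nonzero: there is a sequence `(y_n)_{n ≥ 1}` in `M`, not all zero,
with `u^n • y_n = 0` and `u • y_{n+1} = y_n` for all `n ≥ 1`. -/
theorem tateModule_ne_zero_of_not_isFiniteLength
    {k : Type*} [Field k] (M : Type*) [AddCommGroup M]
    [Module (PowerSeries k) M] [Module k M] [IsScalarTower k (PowerSeries k) M]
    (htors : ∀ m : M, ∃ n : ℕ, (X : PowerSeries k) ^ n • m = 0)
    (hlen : ¬ IsFiniteLength (PowerSeries k) M)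
    (hfd : FiniteDimensional k
      ((Submodule.torsionBy (PowerSeries k) M (X : PowerSeries k)).restrictScalars k)) :
    ∃ y : ℕ → M, (∃ n, 1 ≤ n ∧ y n ≠ 0) ∧
      ∀ n, 1 ≤ n → (X : PowerSeries k) ^ n • y n = 0 ∧ (X : PowerSeries k) • y (n + 1) = y n := by
  classical
  set f : M →ₗ[k] M := ((LinearMap.lsmul (PowerSeries k) M) X).restrictScalars k with hf
  have fa : ∀ m, f m = (X : PowerSeries k) • m := fun m => rfl
  have fp : ∀ n m, (f ^ n) m = (X : PowerSeries k) ^ n • m := by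
    intro n
    induction n with
    | zero => intro m; simp
    | succ n ih =>
      intro m
      rw [pow_succ', Module.End.mul_apply, ih, fa, smul_smul, ← pow_succ']
  have hker : (LinearMap.ker f) =
      ((Submodule.torsionBy (PowerSeries k) M (X : PowerSeries k)).restrictScalars k) := by
    ext m
    simp [fa]
  have hfk : FiniteDimensional k (LinearMap.ker f) := by rw [hker]; exact hfd
  -- all kernels of powers are finite dimensional
  have hkn : ∀ n, FiniteDimensional k (LinearMap.ker (f ^ n)) := by
    intro n
    induction n with
    | zero =>
      have : LinearMap.ker (f ^ 0) = ⊥ := by ext m; simp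
      rw [this]; infer_instance
    | succ n ih =>
      apply Module.Finite.iff_fg.mpr
      apply Submodule.fg_of_fg_map_of_fg_inf_ker f
      · have hle : (LinearMap.ker (f ^ (n+1))).map f ≤ LinearMap.ker (f ^ n) := by
          rintro _ ⟨m, hm, rfl⟩
          have hm' : (f ^ (n+1)) m = 0 := hm
          rw [LinearMap.mem_ker, ← Module.End.mul_apply, ← pow_succ]
          exact hm'
        exact Module.Finite.iff_fg.mp (Submodule.finiteDimensional_of_le hle)
      · exact Module.Finite.iff_fg.mp (Submodule.finiteDimensional_of_le inf_le_right)
  have hanti : ∀ a b, a ≤ b → LinearMap.range (f ^ b) ≤ LinearMap.range (f ^ a) := by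
    rintro a b hab _ ⟨m, rfl⟩
    obtain ⟨c, rfl⟩ := Nat.exists_eq_add_of_le hab
    exact ⟨(f ^ c) m, by rw [pow_add, Module.End.mul_apply]⟩
  obtain ⟨N, hN⟩ := IsArtinian.monotone_stabilizes (R := k) (M := LinearMap.ker f)
    ⟨fun n => OrderDual.toDual ((LinearMap.range (f ^ n)).comap (LinearMap.ker f).subtype),
      fun a b hab => Submodule.comap_mono (hanti a b hab)⟩
  have hst : ∀ v, f v = 0 → v ∈ LinearMap.range (f ^ N) → ∀ n, v ∈ LinearMap.range (f ^ n) := by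
    intro v hv hvN n
    rcases le_total N n with h | h
    · have h1 : (LinearMap.range (f ^ N)).comap (LinearMap.ker f).subtype =
        (LinearMap.range (f ^ n)).comap (LinearMap.ker f).subtype := hN n h
      have h2 : (⟨v, hv⟩ : LinearMap.ker f) ∈
        (LinearMap.range (f ^ N)).comap (LinearMap.ker f).subtype := hvN
      rw [h1] at h2
      exact h2
    · exact hanti _ _ h hvN
  by_cases hV : ∃ v, v ≠ 0 ∧ f v = 0 ∧ v ∈ LinearMap.range (f ^ N)
  · obtain ⟨v, hv0, hv, hvN⟩ := hV
    have hlift : ∀ d : {d : M // ∀ n, d ∈ LinearMap.range (f ^ n)},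
        ∃ e : {d : M // ∀ n, d ∈ LinearMap.range (f ^ n)}, f e.1 = d.1 := by
      rintro ⟨d, hd⟩
      have hm : ∀ n, ∃ m, f m = d ∧ m ∈ LinearMap.range (f ^ n) := by
        intro n
        obtain ⟨z, hz⟩ := hd (n+1)
        exact ⟨(f ^ n) z, by rw [← hz, pow_succ', Module.End.mul_apply], z, rfl⟩
      obtain ⟨m, hmd, hmN⟩ := hm N
      refine ⟨⟨m, fun n => ?_⟩, hmd⟩
      obtain ⟨m', hmd', hmN'⟩ := hm (max n N)
      have h1 : m - m' ∈ LinearMap.range (f ^ n) :=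
        hst _ (by rw [map_sub, hmd, hmd', sub_self])
          (Submodule.sub_mem _ hmN (hanti _ _ (le_max_right _ _) hmN')) n
      have h2 := Submodule.add_mem _ h1 (hanti _ _ (le_max_left _ _) hmN')
      rwa [sub_add_cancel] at h2
    choose g hg using hlift
    let z : ℕ → {d : M // ∀ n, d ∈ LinearMap.range (f ^ n)} :=
      fun n => Nat.rec ⟨v, hst v hv hvN⟩ (fun _ d => g d) n
    have hz : ∀ n, f (z (n+1)).1 = (z n).1 := fun n => hg (z n)
    have hz0 : ∀ n, (f ^ (n+1)) (z n).1 = 0 := by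
      intro n
      induction n with
      | zero => rw [zero_add, pow_one]; exact hv
      | succ n ih => rw [pow_succ, Module.End.mul_apply, hz, ih]
    refine ⟨fun n => (z (n-1)).1, ⟨1, le_rfl, hv0⟩, fun n hn => ?_⟩
    obtain ⟨n, rfl⟩ := Nat.exists_eq_add_of_le' hn
    exact ⟨by rw [← fp]; exact hz0 n, hz n⟩
  · exfalso
    push Not at hV
    have hzero : ∀ n m, (f ^ n) m = 0 → m ∈ LinearMap.range (f ^ N) → m = 0 := by
      intro n
      induction n with
      | zero => intro m hm _; simpa using hm
      | succ n ih =>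
        intro m hm hmN
        by_contra h0
        refine hV m h0 (ih (f m) ?_ ?_) hmN
        · rw [← Module.End.mul_apply, ← pow_succ]; exact hm
        · obtain ⟨w, rfl⟩ := hmN
          exact ⟨f w, by rw [← Module.End.mul_apply, ← Module.End.mul_apply, ← pow_succ, ← pow_succ']⟩
    have htop : LinearMap.ker (f ^ N) = ⊤ := by
      rw [eq_top_iff]
      intro m _
      obtain ⟨n, hn⟩ := htors ((f ^ N) m)
      exact hzero n _ (by rw [fp]; exact hn) ⟨m, rfl⟩
    have hfM : FiniteDimensional k M := by
      have h := hkn N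
      rw [htop] at h
      exact Module.finite_def.mpr (Module.Finite.iff_fg.mp h)
    apply hlen
    rw [isFiniteLength_iff_isNoetherian_isArtinian]
    exact ⟨isNoetherian_of_tower k inferInstance, isArtinian_of_tower k inferInstance⟩
end

section
/- Let M be an 𝔖-module that is derived p-complete and derived u-complete. Assume that the following two k-vector spaces are finite-dimensional over k: (i) {m ∈ M | p • m = 0 and u • m = 0}, and (ii) the quotient {(a, b) ∈ M × M | p • a = u • b} / {(u • m, p • m) | m ∈ M} (these are the cohomology groups in degrees −2 and −1 of the Koszul complex of M with respect to (p, u), i.e., the paper's condition that τ^{<0}(M ⊗^L_𝔖 𝔖/(p,u)) is coherent over k). Then there exists N ∈ ℕ such that every element of M annihilated by some power of p and by some power of u is already annihilated by p^N and by u^N; in symbols, M[p^∞, u^∞] = M[p^N, u^N]. -/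
open PowerSeries

/-- The submodule `{(a, b) ∈ M × M | x • a = y • b}` of cycles in degree `−1` of the Koszul
complex of `M` with respect to `(x, y)`. -/
def koszulCycles (R : Type*) [CommRing R] (x y : R)
    (M : Type*) [AddCommGroup M] [Module R M] : Submodule R (M × M) :=
  LinearMap.ker (x • LinearMap.fst R M M - y • LinearMap.snd R M M)

/-- The map `M → M × M`, `m ↦ (y • m, x • m)`, whose image is the submodule of boundaries
`{(y • m, x • m) | m ∈ M}` inside `koszulCycles R x y M`. -/
def koszulBoundariesMap (R : Type*) [CommRing R] (x y : R)
    (M : Type*) [AddCommGroup M] [Module R M] : M →ₗ[R] M × M :=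
  LinearMap.prod (y • LinearMap.id) (x • LinearMap.id)

/-- The cohomology in degree `−1` of the Koszul complex of `M` with respect to `(x, y)`:
the quotient `{(a, b) ∈ M × M | x • a = y • b} / {(y • m, x • m) | m ∈ M}`. -/
abbrev koszulH1 (R : Type*) [CommRing R] (x y : R)
    (M : Type*) [AddCommGroup M] [Module R M] :=
  koszulCycles R x y M ⧸
    Submodule.comap (koszulCycles R x y M).subtype
      (LinearMap.range (koszulBoundariesMap R x y M))

theorem isArtinian_of_torsion_aux {R A : Type*} [CommRing R] [AddCommGroup A] [Module R A] (x : R)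
    (htors : ∀ a : A, ∃ n : ℕ, x ^ n • a = 0)
    (hK : IsArtinian R (Submodule.torsionBy R A x)) : IsArtinian R A := by
  let D : Submodule R A → ℕ → Submodule R (Submodule.torsionBy R A x) := fun N n =>
    Submodule.comap (Submodule.torsionBy R A x).subtype
      (Submodule.map (LinearMap.lsmul R A (x ^ n)) N)
  have memD : ∀ N n y, y ∈ D N n ↔ ∃ a ∈ N, x ^ n • a = (y : A) := by
    intro N n y
    simp [D]
  have Dmono : ∀ N N' n n', N' ≤ N → n ≤ n' → D N' n' ≤ D N n := by
    intro N N' n n' hN hn y hy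
    rw [memD] at hy ⊢
    obtain ⟨a, ha, h⟩ := hy
    obtain ⟨c, rfl⟩ := Nat.exists_eq_add_of_le hn
    refine ⟨x ^ c • a, N.smul_mem _ (hN ha), ?_⟩
    rw [← h, pow_add, mul_smul]
  have Deq : ∀ N N', N ≤ N' → (∀ n, D N' n ≤ D N n) → N' ≤ N := by
    intro N N' hN hD
    have key : ∀ n a, a ∈ N' → x ^ n • a = 0 → a ∈ N := by
      intro n
      induction n with
      | zero =>
        intro a _ h
        have : a = 0 := by simpa using h
        rw [this]; exact N.zero_mem
      | succ n ih =>
        intro a ha h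
        have hm : x ^ n • a ∈ Submodule.torsionBy R A x := by
          rw [Submodule.mem_torsionBy_iff, ← mul_smul, ← pow_succ']; exact h
        have h1 : (⟨x ^ n • a, hm⟩ : Submodule.torsionBy R A x) ∈ D N' n :=
          (memD _ _ _).2 ⟨a, ha, rfl⟩
        obtain ⟨b, hb, hb'⟩ := (memD _ _ _).1 (hD n h1)
        have h2 : a - b ∈ N := ih _ (N'.sub_mem ha (hN hb)) (by
          rw [smul_sub, hb']; simp)
        simpa using N.add_mem h2 hb
    intro a ha
    obtain ⟨n, hn⟩ := htors a
    exact key n a ha hn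
  rw [← monotone_stabilizes_iff_artinian]
  intro f
  have fanti : ∀ i j, i ≤ j → OrderDual.ofDual (f j) ≤ OrderDual.ofDual (f i) :=
    fun i j h => f.monotone h
  obtain ⟨J, hJ⟩ := (monotone_stabilizes_iff_artinian.2 hK)
    ⟨fun j => OrderDual.toDual (D (OrderDual.ofDual (f j)) j),
      fun i j h => Dmono _ _ _ _ (fanti _ _ h) h⟩
  have hrow : ∀ n, ∃ I, ∀ m, I ≤ m →
      D (OrderDual.ofDual (f I)) n = D (OrderDual.ofDual (f m)) n := fun n =>
    (monotone_stabilizes_iff_artinian.2 hK)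
      ⟨fun j => OrderDual.toDual (D (OrderDual.ofDual (f j)) n),
        fun i j h => Dmono _ _ _ _ (fanti _ _ h) le_rfl⟩
  choose I hI using hrow
  have hJ' : ∀ m, J ≤ m → D (OrderDual.ofDual (f J)) J = D (OrderDual.ofDual (f m)) m := hJ
  let B := J + ∑ n ∈ Finset.range J, I n
  have hIB : ∀ n, n < J → I n ≤ B := fun n hn =>
    (Finset.single_le_sum (f := I) (fun _ _ => Nat.zero_le _) (Finset.mem_range.2 hn)).trans
      (Nat.le_add_left _ _)
  have hJB : J ≤ B := Nat.le_add_right _ _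
  refine ⟨B, fun m hm => ?_⟩
  apply le_antisymm
  · exact f.monotone hm
  · refine Deq (OrderDual.ofDual (f m)) (OrderDual.ofDual (f B)) (fanti _ _ hm) (fun n => ?_)
    rcases lt_or_ge n J with hn | hn
    · rw [← hI n B (hIB n hn), ← hI n m ((hIB n hn).trans hm)]
    · calc D (OrderDual.ofDual (f B)) n ≤ D (OrderDual.ofDual (f J)) J :=
            Dmono _ _ _ _ (fanti _ _ hJB) hn
        _ = D (OrderDual.ofDual (f (max m n))) (max m n) := hJ' _ (hn.trans (le_max_right _ _))
        _ ≤ D (OrderDual.ofDual (f m)) n :=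
            Dmono _ _ _ _ (fanti _ _ (le_max_left _ _)) (le_max_right _ _)

theorem bounded_of_artinian_aux {R M : Type*} [CommRing R] [AddCommGroup M] [Module R M] (x : R)
    (h : IsDerivedComplete R x M) (T : Submodule R M) (hT : IsArtinian R T) :
    ∃ N : ℕ, ∀ n, N ≤ n → ∀ a ∈ T, x ^ n • a = 0 := by
  obtain ⟨N, hN⟩ := (monotone_stabilizes_iff_artinian.2 hT)
    ⟨fun n => OrderDual.toDual (Submodule.map (LinearMap.lsmul R T (x ^ n)) ⊤), by
      intro i j hij
      obtain ⟨c, rfl⟩ := Nat.exists_eq_add_of_le hij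
      rintro _ ⟨a, -, rfl⟩
      refine ⟨x ^ c • a, trivial, ?_⟩
      simp [pow_add, mul_smul, smul_comm (x ^ i)]⟩
  have hN' : Submodule.map (LinearMap.lsmul R T (x ^ N)) ⊤ =
    Submodule.map (LinearMap.lsmul R T (x ^ (N + 1))) ⊤ := hN (N + 1) (Nat.le_succ N)
  have step : ∀ t : T, ∃ t' : T, x ^ N • t = x • (x ^ N • t') := by
    intro t
    have : x ^ N • t ∈ Submodule.map (LinearMap.lsmul R T (x ^ N)) ⊤ := ⟨t, trivial, rfl⟩
    rw [hN'] at this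
    obtain ⟨t', -, ht'⟩ := this
    refine ⟨t', ?_⟩
    rw [← mul_smul, ← pow_succ']
    exact ht'.symm
  choose g hg using step
  have main : ∀ a ∈ T, x ^ N • a = 0 := by
    intro a ha
    have h0 := @h.1 (fun n => ((x ^ N • (g^[n] ⟨a, ha⟩) : T) : M)) 0 (by
      funext n
      simp only [Function.iterate_succ_apply']
      rw [← Submodule.coe_smul, ← hg]
      simp)
    simpa using congrFun h0 0
  refine ⟨N, fun n hn a ha => ?_⟩
  obtain ⟨c, rfl⟩ := Nat.exists_eq_add_of_le hn
  rw [add_comm, pow_add, mul_smul, main a ha, smul_zero]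

theorem isArtinian_of_ker_aux {R K A : Type*} [CommRing R] [Field K] [AddCommGroup A] [Module R A]
    (φ : R →+* K) (hφ : Function.Surjective φ) (hA : ∀ r, φ r = 0 → ∀ a : A, r • a = 0)
    [Module.Finite R A] : IsArtinian R A := by
  have hmax : (RingHom.ker φ).IsMaximal := RingHom.ker_isMaximal_of_surjective φ hφ
  let : Field (R ⧸ RingHom.ker φ) := Ideal.Quotient.field _
  have ht : Module.IsTorsionBySet R A (RingHom.ker φ) := fun a r => hA r r.2 a
  let : Module (R ⧸ RingHom.ker φ) A := ht.module
  have : IsScalarTower R (R ⧸ RingHom.ker φ) A := ht.isScalarTower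
  have : Module.Finite (R ⧸ RingHom.ker φ) A := Module.Finite.of_restrictScalars_finite R _ A
  have : IsArtinian (R ⧸ RingHom.ker φ) A := inferInstance
  exact isArtinian_of_surjective_algebraMap (R := R ⧸ RingHom.ker φ) (Ideal.Quotient.mk_surjective (I := RingHom.ker φ))

theorem generic_aux {R K M : Type*} [CommRing R] [Field K] [AddCommGroup M] [Module R M]
    (φ : R →+* K) (hφ : Function.Surjective φ) (x y : R)
    (hker : ∀ r, φ r = 0 → ∃ c d : R, r = c * x + d * y)
    (hp : IsDerivedComplete R x M) (hu : IsDerivedComplete R y M)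
    (hH2 : Module.Finite R ↥((Submodule.torsionBy R M x) ⊓ (Submodule.torsionBy R M y))) :
    ∃ N : ℕ, ∀ m : M, (∃ a b : ℕ, x ^ a • m = 0 ∧ y ^ b • m = 0) →
      x ^ N • m = 0 ∧ y ^ N • m = 0 := by
  let T : Submodule R M :=
    { carrier := {m | (∃ a : ℕ, x ^ a • m = 0) ∧ ∃ b : ℕ, y ^ b • m = 0}
      zero_mem' := ⟨⟨0, by simp⟩, ⟨0, by simp⟩⟩
      add_mem' := by
        have key : ∀ (x : R) (m n : M), (∃ a : ℕ, x ^ a • m = 0) → (∃ a : ℕ, x ^ a • n = 0) →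
            ∃ a : ℕ, x ^ a • (m + n) = 0 := by
          rintro x m n ⟨a, ha⟩ ⟨b, hb⟩
          refine ⟨a + b, ?_⟩
          rw [smul_add, pow_add, mul_smul, mul_smul, hb, smul_comm, ha]
          simp
        rintro m n ⟨h1, h2⟩ ⟨h3, h4⟩
        exact ⟨key _ _ _ h1 h3, key _ _ _ h2 h4⟩
      smul_mem' := by
        rintro c m ⟨⟨a, ha⟩, ⟨b, hb⟩⟩
        exact ⟨⟨a, by rw [smul_comm, ha, smul_zero]⟩, ⟨b, by rw [smul_comm, hb, smul_zero]⟩⟩ }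
  have hS : IsArtinian R ↥((Submodule.torsionBy R M x) ⊓ (Submodule.torsionBy R M y)) := by
    refine isArtinian_of_ker_aux φ hφ ?_
    rintro r hr ⟨a, ha⟩
    obtain ⟨c, d, rfl⟩ := hker r hr
    obtain ⟨h1, h2⟩ := ha
    have h1' : x • a = 0 := h1
    have h2' : y • a = 0 := h2
    ext
    simp only [Submodule.coe_smul, add_smul, mul_smul]
    simp [h1', h2']
  have hT : IsArtinian R T := by
    apply isArtinian_of_torsion_aux y
    · rintro ⟨a, h1, b, h2⟩
      exact ⟨b, Subtype.ext h2⟩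
    apply isArtinian_of_torsion_aux x
    · rintro ⟨⟨a, ⟨b, h1⟩, h2⟩, h3⟩
      exact ⟨b, Subtype.ext (Subtype.ext h1)⟩
    let ψ : Submodule.torsionBy R (Submodule.torsionBy R T y) x →ₗ[R]
        ↥((Submodule.torsionBy R M x) ⊓ (Submodule.torsionBy R M y)) :=
      LinearMap.codRestrict _ (T.subtype ∘ₗ (Submodule.subtype _) ∘ₗ (Submodule.subtype _)) (by
        rintro ⟨⟨⟨a, h1⟩, h2⟩, h3⟩
        have h3' := (Submodule.mem_torsionBy_iff _ _).1 h3
        have h2' := (Submodule.mem_torsionBy_iff _ _).1 h2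
        exact ⟨congrArg (fun z : Submodule.torsionBy R T y => ((z : T) : M)) h3',
          congrArg (fun z : T => (z : M)) h2'⟩)
    refine isArtinian_of_injective ψ ?_
    intro a b hab
    have := congrArg Subtype.val hab
    exact Subtype.ext (Subtype.ext (Subtype.ext this))
  obtain ⟨N1, h1⟩ := bounded_of_artinian_aux x hp T hT
  obtain ⟨N2, h2⟩ := bounded_of_artinian_aux y hu T hT
  refine ⟨max N1 N2, ?_⟩
  rintro m ⟨a, b, ha, hb⟩
  have hm : m ∈ T := ⟨⟨a, ha⟩, ⟨b, hb⟩⟩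
  exact ⟨h1 _ (le_max_left _ _) m hm, h2 _ (le_max_right _ _) m hm⟩

/-- Let `p` be a prime, `k` a perfect field of characteristic `p`, and
`𝔖 = W(k)[[u]]`.  Let `M` be an `𝔖`-module which is derived `p`-complete and derived
`u`-complete, and assume that the degree `−2` and degree `−1` cohomology groups of the
Koszul complex of `M` with respect to `(p, u)`, namely
`{m ∈ M | p • m = 0 ∧ u • m = 0}` and
`{(a, b) ∈ M × M | p • a = u • b} / {(u • m, p • m) | m ∈ M}`,
are finite-dimensional over `k` (they are `𝔖`-modules annihilated by `p` and `u`, hence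
`k`-vector spaces, and finite dimensionality over `k` is expressed here as finite
generation over `𝔖`).  Then there is an `N ∈ ℕ` such that every element of `M`
annihilated by a power of `p` and a power of `u` is annihilated by `p^N` and by `u^N`,
i.e. `M[p^∞, u^∞] = M[p^N, u^N]`. -/
theorem torsion_bounded_of_koszul_coherent
    (p : ℕ) [Fact p.Prime] (k : Type*) [Field k] [CharP k p] [PerfectRing k p]
    (M : Type*) [AddCommGroup M] [Module (PowerSeries (WittVector p k)) M]
    (hp : IsDerivedComplete (PowerSeries (WittVector p k))
      (p : PowerSeries (WittVector p k)) M)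
    (hu : IsDerivedComplete (PowerSeries (WittVector p k))
      (X : PowerSeries (WittVector p k)) M)
    (hH2 : Module.Finite (PowerSeries (WittVector p k))
      ↥((Submodule.torsionBy (PowerSeries (WittVector p k)) M
          (p : PowerSeries (WittVector p k))) ⊓
        (Submodule.torsionBy (PowerSeries (WittVector p k)) M
          (X : PowerSeries (WittVector p k)))))
    (hH1 : Module.Finite (PowerSeries (WittVector p k))
      (koszulH1 (PowerSeries (WittVector p k)) (p : PowerSeries (WittVector p k))
        (X : PowerSeries (WittVector p k)) M)) :
    ∃ N : ℕ, ∀ m : M,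
      (∃ a b : ℕ, (p : PowerSeries (WittVector p k)) ^ a • m = 0 ∧
        (X : PowerSeries (WittVector p k)) ^ b • m = 0) →
      (p : PowerSeries (WittVector p k)) ^ N • m = 0 ∧
        (X : PowerSeries (WittVector p k)) ^ N • m = 0 := by
  have hW : ∀ w : WittVector p k, w.coeff 0 = 0 → ∃ z : WittVector p k, w = z * p := by
    intro w hw
    obtain ⟨z, hz⟩ := Ideal.mem_span_singleton.1
      ((WittVector.mem_span_p_iff_coeff_zero_eq_zero w).2 hw)
    exact ⟨z, by rw [hz, mul_comm]⟩
  refine generic_aux ((WittVector.constantCoeff).comp (PowerSeries.constantCoeff) :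
    PowerSeries (WittVector p k) →+* k) ?_ _ _ ?_ hp hu hH2
  · intro c
    refine ⟨PowerSeries.C (WittVector.teichmuller p c), ?_⟩
    simp [WittVector.constantCoeff]
  · intro r hr
    obtain ⟨z, hz⟩ := hW (PowerSeries.constantCoeff r) hr
    have : (X : PowerSeries (WittVector p k)) ∣ r - PowerSeries.C z * p := by
      rw [X_dvd_iff]
      simp [hz]
    obtain ⟨d, hd⟩ := this
    exact ⟨PowerSeries.C z, d, by rw [mul_comm d, ← hd]; ring⟩
end

section
/- Let R be a commutative ring, x ∈ R, and let (M_α)_{α ∈ A} be a family of R-modules, each of which is derived x-complete. Then the x-adic Tate module of the direct sum vanishes: every sequence (y_n)_{n ≥ 1} of elements of ⊕_{α ∈ A} M_α with x^n • y_n = 0 and x • y_{n+1} = y_n for all n ≥ 1 is identically zero, i.e., T_x(⊕_{α ∈ A} M_α) = 0. -/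
open DirectSum

/-- If `(M_α)_{α ∈ A}` is a family of derived `x`-complete `R`-modules, then the `x`-adic
Tate module of `⊕_α M_α` vanishes: every sequence `(y_n)_{n ≥ 1}` in the direct sum with
`x^n • y_n = 0` and `x • y_{n+1} = y_n` for all `n ≥ 1` is identically zero. -/
theorem tateModule_directSum_eq_zero
    {R : Type*} [CommRing R] (x : R) {A : Type*}
    (M : A → Type*) [∀ α, AddCommGroup (M α)] [∀ α, Module R (M α)]
    (hM : ∀ α, IsDerivedComplete R x (M α))
    (y : ℕ → ⨁ α, M α)
    (hy : ∀ n, 1 ≤ n → x ^ n • y n = 0 ∧ x • y (n + 1) = y n) :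
    ∀ n, 1 ≤ n → y n = 0 := by
  intro n hn
  ext α
  obtain ⟨k, rfl⟩ : ∃ k, n = k + 1 := ⟨n - 1, by omega⟩
  have h : (fun k => y (k + 1) α) = (0 : ℕ → M α) := by
    apply (hM α).1
    funext k
    have h2 := congrArg (fun z : ⨁ α, M α => z α) (hy (k + 1) (by omega)).2
    simp only [DirectSum.smul_apply] at h2
    simp [h2]
  exact congrFun h k
end

section
/- Let A be a discrete condensed abelian group and let q : A ⟶ Q be an epimorphism in the category of condensed abelian groups. Then Q is discrete. -/
open CategoryTheory

universe u

lemma CondensedMod.mono_counit (R : Type (u+1)) [Ring R] (Q : CondensedMod.{u} R) :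
    Mono ((CondensedMod.LocallyConstant.adjunction R).counit.app Q) := by
  set adj := CondensedMod.LocallyConstant.adjunction R with hadj
  have hff : (CondensedMod.LocallyConstant.functor R).Full := inferInstance
  have hfa : (CondensedMod.LocallyConstant.functor R).Faithful := inferInstance
  have hiso : IsIso ((Condensed.underlying (ModuleCat R)).map (adj.counit.app Q)) := by
    have h := adj.right_triangle_components Q
    have : IsIso (adj.unit.app ((Condensed.underlying (ModuleCat R)).obj Q)) := inferInstance
    rw [← IsIso.eq_inv_comp] at h
    rw [h]
    infer_instance
  have hinj : Function.Injective
      ((adj.counit.app Q).hom.app (Opposite.op (CompHaus.of PUnit.{u + 1}))) :=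
    ((ConcreteCategory.isIso_iff_bijective
      ((Condensed.underlying (ModuleCat R)).map (adj.counit.app Q))).1 hiso).1
  apply Sheaf.mono_of_injective
  rintro ⟨S⟩ x y hxy
  refine LocallyConstant.ext (fun s => ?_)
  let g : CompHaus.of PUnit.{u + 1} ⟶ S :=
    CompHausLike.ofHom _ (ContinuousMap.const PUnit.{u + 1} s)
  have h2 : ((CondensedMod.LocallyConstant.functor R).obj _).obj.map g.op x
      = ((CondensedMod.LocallyConstant.functor R).obj _).obj.map g.op y := by
    apply hinj
    have h3 := CondensedMod.hom_naturality_apply R (adj.counit.app Q) g.op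
    exact (h3 x).trans ((congrArg _ hxy).trans (h3 y).symm)
  exact LocallyConstant.congr_fun h2 PUnit.unit

/-- Let `A` be a discrete condensed abelian group (i.e. `A` is in the essential image of
the discrete/constant-sheaf functor) and let `q : A ⟶ Q` be an epimorphism of condensed
abelian groups.  Then `Q` is discrete. -/
theorem CondensedAb.isDiscrete_of_epi (A Q : CondensedAb.{u}) (hA : A.IsDiscrete)
    (q : A ⟶ Q) [Epi q] : Q.IsDiscrete := by
  have hA' : IsIso ((CondensedMod.LocallyConstant.adjunction (ULift ℤ)).counit.app A) :=
    ((CondensedMod.isDiscrete_tfae (ULift.{u+1} ℤ) A).out 0 4).1 hA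
  refine ((CondensedMod.isDiscrete_tfae (ULift.{u+1} ℤ) Q).out 0 4).2 ?_
  have hm := CondensedMod.mono_counit (ULift ℤ) Q
  have he : Epi ((CondensedMod.LocallyConstant.adjunction (ULift ℤ)).counit.app Q) := by
    have h := (CondensedMod.LocallyConstant.adjunction (ULift ℤ)).counit.naturality q
    have h1 : Epi ((CondensedMod.LocallyConstant.adjunction (ULift ℤ)).counit.app A ≫ q) :=
      epi_comp _ _
    exact epi_of_epi_fac h
  exact isIso_of_mono_of_epi _
end

section
/- Let A be a discrete condensed abelian group and let ι : N ⟶ A be a monomorphism in the category of condensed abelian groups. Then N is discrete. -/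
open CategoryTheory

universe u

lemma CondensedAb.aux_retract (F : Profinite.{u}ᵒᵖ ⥤ Type (u + 1)) {X Y : Profinite.{u}}
    (s : X ⟶ Y) (p : Y ⟶ X) (h : s ≫ p = 𝟙 X) (a : F.obj (.op X)) :
    F.map s.op (F.map p.op a) = a := by
  rw [← ConcreteCategory.comp_apply, ← F.map_comp, ← op_comp, h]
  simp

open Limits in
lemma CondensedAb.aux_section (S : Profinite.{u}) (j : DiscreteQuotient S) :
    ∃ s : S.diagram.obj j ⟶ S, s ≫ S.asLimitCone.π.app j = 𝟙 (S.diagram.obj j) := by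
  obtain ⟨g, hg⟩ := (DiscreteQuotient.proj_surjective j).hasRightInverse
  have : DiscreteTopology (S.diagram.obj j).toTop := ⟨rfl⟩
  let g' : (S.diagram.obj j).toTop → S.toTop := g
  have hc : Continuous g' := continuous_of_discreteTopology
  refine ⟨CompHausLike.ofHom (X := (S.diagram.obj j).toTop) (Y := S.toTop) _ ⟨g', hc⟩, ?_⟩
  ext x
  exact hg x

open Limits in
lemma CondensedAb.aux_colimit {F G : Profinite.{u}ᵒᵖ ⥤ Type (u + 1)} (i : F ⟶ G) [Mono i]
    (S : Profinite.{u}) (h : IsColimit (G.mapCocone S.asLimitCone.op)) :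
    Nonempty (IsColimit (F.mapCocone S.asLimitCone.op)) := by
  have hinj (X) : Function.Injective (i.app X) :=
    (mono_iff_injective _).1 inferInstance
  refine ⟨Types.FilteredColimit.isColimitOf' _ _ ?_ ?_⟩
  · intro (x : F.obj (.op S))
    obtain ⟨⟨j⟩, a, ha⟩ := Types.jointly_surjective _ h (i.app (.op S) x)
    obtain ⟨s, hs⟩ := CondensedAb.aux_section S j
    replace ha : G.map (S.asLimitCone.π.app j).op a = i.app (.op S) x := ha
    refine ⟨⟨j⟩, F.map s.op x, hinj _ ?_⟩
    change i.app (.op S) x = i.app (.op S) (F.map (S.asLimitCone.π.app j).op (F.map s.op x))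
    have h1 : G.map s.op (G.map (S.asLimitCone.π.app j).op a) = a :=
      CondensedAb.aux_retract G s (S.asLimitCone.π.app j) hs a
    have h2 : i.app _ (F.map s.op x) = a := by
      rw [NatTrans.naturality_apply i, ← ha, h1]
    have h3 := NatTrans.naturality_apply i (S.asLimitCone.π.app j).op (F.map s.op x)
    exact (h3.trans ((congrArg _ h2).trans ha)).symm
  · intro ⟨j⟩ x y hxy
    obtain ⟨s, hs⟩ := CondensedAb.aux_section S j
    refine ⟨⟨j⟩, 𝟙 _, ?_⟩
    replace hxy : F.map (S.asLimitCone.π.app j).op x = F.map (S.asLimitCone.π.app j).op y := hxy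
    have h1 (a) : F.map s.op (F.map (S.asLimitCone.π.app j).op a) = a :=
      CondensedAb.aux_retract F s (S.asLimitCone.π.app j) hs a
    have : x = y := by rw [← h1 x, hxy, h1 y]
    rw [this]

/-- Let `A` be a discrete condensed abelian group (i.e. `A` is in the essential image of
the discrete/constant-sheaf functor) and let `ι : N ⟶ A` be a monomorphism of condensed
abelian groups.  Then `N` is discrete. -/
theorem CondensedAb.isDiscrete_of_mono (A N : CondensedAb.{u}) (hA : A.IsDiscrete)
    (ι : N ⟶ A) [Mono ι] : N.IsDiscrete := by
  rw [CondensedMod.isDiscrete_iff_isDiscrete_forget,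
    ((CondensedSet.isDiscrete_tfae _).out 0 6 :)] at hA ⊢
  intro S
  have : (Condensed.forget (ULift.{u+1} ℤ)).IsRightAdjoint :=
    (Condensed.freeForgetAdjunction _).isRightAdjoint
  have : Mono ((Condensed.forget (ULift.{u+1} ℤ)).map ι) := inferInstance
  have h2 : Mono ((sheafToPresheaf _ _).map ((Condensed.forget (ULift.{u+1} ℤ)).map ι)) :=
    inferInstance
  have h3 (X : CompHaus.{u}ᵒᵖ) : Mono (((sheafToPresheaf _ _).map
    ((Condensed.forget (ULift.{u+1} ℤ)).map ι)).app X) := inferInstance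
  let i := Functor.whiskerLeft profiniteToCompHaus.op
    ((sheafToPresheaf _ _).map ((Condensed.forget (ULift.{u+1} ℤ)).map ι))
  have h4 (X) : Mono (i.app X) := h3 _
  have : Mono i := NatTrans.mono_of_mono_app i
  exact CondensedAb.aux_colimit i S (hA S).some
end

section
/- For every condensed set X, the counit morphism ε_X : disc(X(*)) ⟶ X is a monomorphism of condensed sets, where disc : Set → CondensedSet denotes the discrete (constant sheaf) functor, left adjoint to the underlying-set functor X ↦ X(*) given by evaluation at the one-point compact Hausdorff space, and ε is the counit of this adjunction. -/
open CategoryTheory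

universe u

theorem CondensedSet.counit_injective_aux (X : CondensedSet.{u}) (S : CompHaus.{u}ᵒᵖ) :
    Function.Injective ((CondensedSet.LocallyConstant.adjunction.counit.app X).hom.app S) := by
  intro f g h
  let f' : LocallyConstant S.unop (X.obj.obj (Opposite.op (CompHaus.of PUnit.{u+1}))) := f
  let g' : LocallyConstant S.unop (X.obj.obj (Opposite.op (CompHaus.of PUnit.{u+1}))) := g
  suffices f' = g' from this
  ext s
  let i : CompHaus.of PUnit.{u+1} ⟶ S.unop := CompHausLike.ofHom _ (ContinuousMap.const _ s)
  have key : ∀ k : LocallyConstant S.unop (X.obj.obj (Opposite.op (CompHaus.of PUnit.{u+1}))),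
      X.obj.map i.op ((CondensedSet.LocallyConstant.adjunction.counit.app X).hom.app S k) = k s := by
    intro k
    have h1 := ConcreteCategory.congr_hom
      ((CondensedSet.LocallyConstant.adjunction.counit.app X).hom.naturality i.op) k
    have h2 := ConcreteCategory.congr_hom
      (CondensedSet.LocallyConstant.adjunction.right_triangle_components X) (k s)
    exact h1.symm.trans h2
  exact (key f').symm.trans ((congrArg (X.obj.map i.op) h).trans (key g'))

/-- For every condensed set `X`, the counit `disc(X(*)) ⟶ X` of the adjunction between the
discrete (constant sheaf) functor `Set → CondensedSet` and the underlying-set functor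
(evaluation at the one-point compact Hausdorff space) is a monomorphism of condensed
sets. -/
theorem CondensedSet.mono_discreteUnderlyingAdj_counit_app (X : CondensedSet.{u}) :
    Mono ((Condensed.discreteUnderlyingAdj (Type (u + 1))).counit.app X) := by
  have h : Mono (CondensedSet.LocallyConstant.adjunction.counit.app X) :=
    Sheaf.mono_of_injective _ (CondensedSet.counit_injective_aux X)
  have e := (Condensed.discreteUnderlyingAdj (Type (u + 1))).leftAdjointUniq_hom_app_counit
    CondensedSet.LocallyConstant.adjunction X
  rw [← e]
  exact mono_comp _ _
end

section
/- Let k be a field, let M be a module over the power series ring k[[u]], and let K ⊆ M be a finitely generated k[[u]]-submodule. Then the natural map T_u(M) → T_u(M/K), given by applying the quotient map M → M/K componentwise to compatible sequences, is injective, and there exists an injective k[[u]]-linear map from the cokernel of T_u(M) → T_u(M/K) into K; in other words, there is an exact sequence of k[[u]]-modules 0 → T_u(M) → T_u(M/K) → K. -/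
open PowerSeries

/-- The `x`-adic Tate module of an `R`-module `M`, realized as the `R`-submodule of
`∏_{n ≥ 1} M[x^n]` (reindexed so that the `n`-th component is `y_{n+1} ∈ M[x^{n+1}]`)
consisting of the sequences `(y_n)_{n ≥ 1}` with `x^n • y_n = 0` and `x • y_{n+1} = y_n`
for all `n ≥ 1`, with the componentwise `R`-action. -/
def tateModule (R : Type*) [CommRing R] (x : R)
    (M : Type*) [AddCommGroup M] [Module R M] : Submodule R (ℕ → M) where
  carrier := {y | ∀ n : ℕ, x ^ (n + 1) • y n = 0 ∧ x • y (n + 1) = y n}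
  zero_mem' := by intro n; simp
  add_mem' := by
    intro a b ha hb n
    refine ⟨?_, ?_⟩ <;> simp [smul_add, (ha n).1, (hb n).1, (ha n).2, (hb n).2]
  smul_mem' := by
    intro c y hy n
    constructor
    · rw [Pi.smul_apply, smul_comm, (hy n).1, smul_zero]
    · rw [Pi.smul_apply, Pi.smul_apply, smul_comm, (hy n).2]

/-- The map `T_x(M) → T_x(N)` induced by an `R`-linear map `f : M → N`, given by applying
`f` componentwise to compatible sequences. -/
def tateModuleMap {R : Type*} [CommRing R] (x : R)
    {M N : Type*} [AddCommGroup M] [Module R M] [AddCommGroup N] [Module R N]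
    (f : M →ₗ[R] N) : tateModule R x M →ₗ[R] tateModule R x N where
  toFun y := ⟨fun n => f (y.1 n), by
    intro n
    constructor
    · rw [← map_smul, (y.2 n).1, map_zero]
    · rw [← map_smul, (y.2 n).2]⟩
  map_add' a b := by
    apply Subtype.ext
    funext n
    simp
  map_smul' c a := by
    apply Subtype.ext
    funext n
    simp

theorem aux_torsion {R : Type*} [CommRing R] [IsNoetherianRing R] (x : R)
    {K : Type*} [AddCommGroup K] [Module R K] [Module.Finite R K] :
    ∃ N : ℕ, ∀ (n : ℕ) (y : K), x ^ n • y = 0 → x ^ N • y = 0 := by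
  let f : ℕ →o Submodule R K :=
    { toFun := fun n => LinearMap.ker (LinearMap.lsmul R K (x ^ n))
      monotone' := by
        intro a b hab y hy
        simp only [LinearMap.mem_ker, LinearMap.lsmul_apply] at hy ⊢
        obtain ⟨c, rfl⟩ := Nat.exists_eq_add_of_le hab
        rw [add_comm, pow_add, mul_smul, hy, smul_zero] }
  obtain ⟨N, hN⟩ := monotone_stabilizes_iff_noetherian.mpr (inferInstance : IsNoetherian R K) f
  refine ⟨N, fun n y hy => ?_⟩
  have h1 : y ∈ f (max N n) := by
    apply f.monotone (le_max_right N n)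
    exact hy
  rw [← hN _ (le_max_left N n)] at h1
  exact h1

theorem aux_sum {k : Type*} [Field k] {K : Type*} [AddCommGroup K] [Module (PowerSeries k) K]
    [Module.Finite (PowerSeries k) K] (d : ℕ → K) :
    ∃ T : ℕ → K, ∀ n, T n = d n + (X : PowerSeries k) • T (n + 1) := by
  obtain ⟨r, π, hπ⟩ := Module.Finite.exists_fin' (PowerSeries k) K
  choose c hc using fun n => hπ (d n)
  let t : ℕ → Fin r → PowerSeries k := fun n i =>
    PowerSeries.mk fun j => ∑ a ∈ Finset.range (j + 1), coeff (j - a) (c (n + a) i)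
  have ht : ∀ n, t n = c n + (X : PowerSeries k) • t (n + 1) := by
    intro n
    funext i
    ext j
    cases j with
    | zero => simp [t]
    | succ j =>
      simp only [t, Pi.add_apply, Pi.smul_apply, smul_eq_mul, map_add, coeff_succ_X_mul, coeff_mk]
      rw [Finset.sum_range_succ', add_comm]
      congr 1
      refine Finset.sum_congr rfl fun a _ => ?_
      rw [Nat.add_sub_add_right, add_assoc n 1 a, add_comm 1 a]
  refine ⟨fun n => π (t n), fun n => ?_⟩
  change π (t n) = d n + (X : PowerSeries k) • π (t (n + 1))
  conv_lhs => rw [ht n]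
  rw [map_add, map_smul, hc]

theorem aux_sep {k : Type*} [Field k] {K : Type*} [AddCommGroup K] [Module (PowerSeries k) K]
    [Module.Finite (PowerSeries k) K] (z : K)
    (h : ∀ n : ℕ, ∃ w : K, (X : PowerSeries k) ^ (n + 1) • w = z) : z = 0 := by
  have hne : Ideal.span {(X : PowerSeries k)} ≠ ⊤ := by
    rw [Ne, Ideal.span_singleton_eq_top]
    exact X_prime.not_isUnit
  have := Ideal.iInf_pow_smul_eq_bot_of_isLocalRing (M := K) _ hne
  rw [← Submodule.mem_bot (PowerSeries k), ← this, Submodule.mem_iInf]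
  intro n
  obtain ⟨w, hw⟩ := h n
  rw [← hw, pow_succ, mul_smul]
  exact Submodule.smul_mem_smul (Ideal.pow_mem_pow (Ideal.mem_span_singleton_self _) n) trivial

theorem aux_pow {R : Type*} [CommRing R] {x : R}
    {M : Type*} [AddCommGroup M] [Module R M] (y : tateModule R x M) (n N : ℕ) :
    x ^ N • y.1 (n + N) = y.1 n := by
  induction N with
  | zero => simp
  | succ N ih => rw [pow_succ, mul_smul, ← add_assoc, (y.2 _).2, ih]

/-- Let `k` be a field, `M` a `k[[u]]`-module and `K ⊆ M` a finitely generated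
`k[[u]]`-submodule.  Then the natural map `T_u(M) → T_u(M/K)`, given by applying the
quotient map componentwise, is injective, and there is an injective `k[[u]]`-linear map
from its cokernel into `K`; i.e. there is an exact sequence
`0 → T_u(M) → T_u(M/K) → K` of `k[[u]]`-modules. -/
theorem tateModule_quotient_exact
    {k : Type*} [Field k] (M : Type*) [AddCommGroup M] [Module (PowerSeries k) M]
    (K : Submodule (PowerSeries k) M) (hK : K.FG) :
    Function.Injective (tateModuleMap (X : PowerSeries k) K.mkQ) ∧
      ∃ ψ : ((tateModule (PowerSeries k) (X : PowerSeries k) (M ⧸ K)) ⧸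
          LinearMap.range (tateModuleMap (X : PowerSeries k) K.mkQ)) →ₗ[PowerSeries k] K,
        Function.Injective ψ := by
  have : Module.Finite (PowerSeries k) K := Module.Finite.iff_fg.mpr hK
  obtain ⟨N, hN⟩ := aux_torsion (X : PowerSeries k) (K := K)
  have hN' : ∀ (n : ℕ) (y : M), y ∈ K → (X : PowerSeries k) ^ n • y = 0 →
      (X : PowerSeries k) ^ N • y = 0 := by
    intro n y hy h
    exact congrArg Subtype.val (hN n ⟨y, hy⟩ (Subtype.ext h))
  constructor
  · rw [injective_iff_map_eq_zero]
    intro y hy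
    apply Subtype.ext
    funext n
    have h1 : y.1 (n + N) ∈ K := by
      have := congrFun (congrArg Subtype.val hy) (n + N)
      exact (Submodule.Quotient.mk_eq_zero K).mp this
    have := hN' _ _ h1 (y.2 (n + N)).1
    rw [aux_pow] at this
    exact this
  · let T := tateModule (PowerSeries k) (X : PowerSeries k) (M ⧸ K)
    let P : T → K → Prop := fun y L =>
      ∀ n : ℕ, ∃ m : M, K.mkQ m = y.1 n ∧ (X : PowerSeries k) ^ (n + 1) • m = L
    have hex : ∀ y : T, ∃ L : K, P y L := by
      intro y
      choose m hm using fun n => K.mkQ_surjective (y.1 n)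
      have h0 : (X : PowerSeries k) • m 0 ∈ K := by
        rw [← Submodule.Quotient.mk_eq_zero, ← Submodule.mkQ_apply, map_smul, hm]
        simpa using (y.2 0).1
      have hs : ∀ n, (X : PowerSeries k) • m (n + 1) - m n ∈ K := by
        intro n
        rw [← Submodule.Quotient.mk_eq_zero, ← Submodule.mkQ_apply, map_sub, map_smul, hm, hm,
          (y.2 n).2, sub_self]
      let d : ℕ → K := fun n => Nat.casesOn n ⟨_, h0⟩ fun n => ⟨_, hs n⟩
      obtain ⟨t, ht⟩ := aux_sum (k := k) d
      have ht0 : (t 0 : M) = (X : PowerSeries k) • m 0 + (X : PowerSeries k) • (t 1 : M) :=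
        congrArg Subtype.val (ht 0)
      have hts : ∀ n, (t (n + 1) : M) = ((X : PowerSeries k) • m (n + 1) - m n) +
          (X : PowerSeries k) • (t (n + 2) : M) :=
        fun n => congrArg Subtype.val (ht (n + 1))
      refine ⟨t 0, fun n => ⟨m n + t (n + 1), ?_, ?_⟩⟩
      · rw [map_add, hm]
        simp
      · induction n with
        | zero => rw [ht0, zero_add, pow_one, smul_add]
        | succ n ih =>
          rw [← ih, pow_succ, mul_smul, hts n, smul_add]
          congr 1
          abel
    have huniq : ∀ y L L', P y L → P y L' → L = L' := by
      intro y L L' h h'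
      rw [← sub_eq_zero]
      apply aux_sep (k := k)
      intro n
      obtain ⟨m, hm, hL⟩ := h n
      obtain ⟨m', hm', hL'⟩ := h' n
      refine ⟨⟨m - m', ?_⟩, ?_⟩
      · rw [← Submodule.Quotient.mk_eq_zero, ← Submodule.mkQ_apply, map_sub, hm, hm', sub_self]
      · apply Subtype.ext
        simp [smul_sub, hL, hL']
    choose φ hφ using hex
    let Φ : T →ₗ[PowerSeries k] K :=
      { toFun := φ
        map_add' := by
          intro a b
          refine huniq _ _ _ (hφ _) fun n => ?_
          obtain ⟨m, hm, hL⟩ := hφ a n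
          obtain ⟨m', hm', hL'⟩ := hφ b n
          exact ⟨m + m', by rw [map_add, hm, hm']; rfl, by rw [smul_add, hL, hL']; rfl⟩
        map_smul' := by
          intro c a
          refine huniq _ _ _ (hφ _) fun n => ?_
          obtain ⟨m, hm, hL⟩ := hφ a n
          exact ⟨c • m, by rw [map_smul, hm]; rfl, by rw [smul_comm, hL]; rfl⟩ }
    have hker : LinearMap.ker Φ = LinearMap.range (tateModuleMap (X : PowerSeries k) K.mkQ) := by
      apply le_antisymm
      · intro y hy
        have hy0 : φ y = 0 := hy
        have hP := hφ y
        rw [hy0] at hP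
        choose m hm hm0 using hP
        refine ⟨⟨fun n => (X : PowerSeries k) ^ N • m (n + N), fun n => ⟨?_, ?_⟩⟩, ?_⟩
        · rw [← mul_smul, ← pow_add, show n + 1 + N = n + N + 1 by ring, hm0]
          rfl
        · rw [smul_comm, ← sub_eq_zero, ← smul_sub]
          apply hN' (n + N + 1)
          · rw [← Submodule.Quotient.mk_eq_zero, ← Submodule.mkQ_apply, map_sub, map_smul, hm, hm,
              show n + 1 + N = n + N + 1 by ring, (y.2 (n + N)).2, sub_self]
          · rw [smul_sub, hm0, ← mul_smul, ← pow_succ, show n + 1 + N = n + N + 1 by ring, hm0]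
            simp
        · apply Subtype.ext
          funext n
          change K.mkQ ((X : PowerSeries k) ^ N • m (n + N)) = y.1 n
          rw [map_smul, hm, aux_pow]
      · rintro _ ⟨y, rfl⟩
        refine huniq _ _ _ (hφ _) fun n => ⟨y.1 n, rfl, ?_⟩
        rw [(y.2 n).1]
        rfl
    refine ⟨Submodule.liftQ _ Φ hker.ge, ?_⟩
    rw [← LinearMap.ker_eq_bot]
    exact Submodule.ker_liftQ_eq_bot _ _ _ hker.le
end
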